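/- On an open subset of ℝ³ with coordinates (x¹, x², x³) = (x¹, x², φ), let the metric be g_{ab} = g̃_{ab}(x¹,x²) for a,b ∈ {1,2}, g_{a3} = g_{3a} = 0, g_{33} = α(x¹,x²)², where (g̃_{ab}) is a smooth positive-definite 2×2 matrix-valued function and α > 0 is smooth, both independent of φ. Let ω = ω(x¹,x²) be smooth and independent of φ, and define the symmetric tensor field T by T^{ab} = 0, T^{33} = 0, and T^{a3} = T^{3a} = α^{−3}(det g̃)^{−1/2} ε^{ab} ∂_b ω for a ∈ {1,2}, where ε^{12} = −ε^{21} = 1, ε^{11} = ε^{22} = 0. Then T is trace-free, g_{ij}T^{ij} = 0, and T satisfies the momentum constraint ∇_j T^{ij} = 0 for i = 1,2,3. -/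

import Mathlib

open Matrix

noncomputable section

abbrev V3 := Fin 3 → ℝ

/-- Partial derivative `∂ᵢ f` on `ℝ³`. -/
def pd (i : Fin 3) (f : V3 → ℝ) (x : V3) : ℝ := fderiv ℝ f x (Pi.single i 1)

/-- Christoffel symbols `Γ^i_{jk} = (1/2) g^{il}(∂_j g_{lk} + ∂_k g_{jl} - ∂_l g_{jk})`. -/
def christoffel (g : V3 → Matrix (Fin 3) (Fin 3) ℝ) (i j k : Fin 3) (x : V3) : ℝ :=
  (1 / 2) * ∑ l, (g x)⁻¹ i l *
    (pd j (fun y => g y l k) x + pd k (fun y => g y j l) x - pd l (fun y => g y j k) x)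

/-- `|g| = (det g)^{1/2}`. -/
def sqrtDet (g : V3 → Matrix (Fin 3) (Fin 3) ℝ) (x : V3) : ℝ := Real.sqrt (g x).det

/-- Covariant divergence of a contravariant symmetric 2-tensor:
`∇_j T^{ij} = |g|⁻¹ ∂_j(|g| T^{ij}) + Γ^i_{jk} T^{jk}`. -/
def covDivUp (g T : V3 → Matrix (Fin 3) (Fin 3) ℝ) (i : Fin 3) (x : V3) : ℝ :=
  (sqrtDet g x)⁻¹ * (∑ j, pd j (fun y => sqrtDet g y * T y i j) x) +
    ∑ j, ∑ k, christoffel g i j k x * T x j k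

/-- Covariant divergence in mixed form, for a contravariant tensor `T^{ij}`:
`∇_j T_i^{ j} = |g|⁻¹ ∂_j(|g| g_{ik} T^{kj}) - (1/2) T^{jk} ∂_i g_{jk}`. -/
def covDivLow (g T : V3 → Matrix (Fin 3) (Fin 3) ℝ) (i : Fin 3) (x : V3) : ℝ :=
  (sqrtDet g x)⁻¹ * (∑ j, pd j (fun y => sqrtDet g y * (∑ k, g y i k * T y k j)) x) -
    (1 / 2) * ∑ j, ∑ k, T x j k * pd i (fun y => g y j k) x

lemma upd_eq (x : V3) (t : ℝ) : Function.update x 2 t = x + Pi.single 2 (t - x 2) := by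
  ext i
  fin_cases i <;> simp [Function.update, Pi.single]

lemma pd_two_zero (f : V3 → ℝ) (h : ∀ x t, f (Function.update x 2 t) = f x) (x : V3) :
    pd 2 f x = 0 := by
  unfold pd
  by_cases hd : DifferentiableAt ℝ f x
  · rw [← hd.lineDeriv_eq_fderiv]
    unfold lineDeriv
    have : (fun t : ℝ => f (x + t • (Pi.single 2 1 : V3))) = fun _ => f x := by
      funext t
      rw [← h x (x 2 + t), upd_eq]
      congr 2
      ext i
      fin_cases i <;> simp
    rw [this]
    simp
  · rw [fderiv_zero_of_not_differentiableAt hd]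
    simp

lemma pd_ind (i : Fin 3) (f : V3 → ℝ) (h : ∀ x t, f (Function.update x 2 t) = f x) (x : V3)
    (t : ℝ) : pd i f (Function.update x 2 t) = pd i f x := by
  unfold pd
  rw [upd_eq, ← fderiv_comp_add_right]
  congr 2
  funext y
  rw [← h y (y 2 + (t - x 2)), upd_eq]
  congr 2
  ext i
  simp

lemma pd_const (i : Fin 3) (r : ℝ) (x : V3) : pd i (fun _ => r) x = 0 := by
  simp [pd]

lemma pd_sq (i : Fin 3) (f : V3 → ℝ) (x : V3) (hf : DifferentiableAt ℝ f x) :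
    pd i (fun y => f y ^ 2) x = 2 * f x * pd i f x := by
  unfold pd
  rw [(hf.hasFDerivAt.pow 2).fderiv]
  simp

lemma pd_quot (i : Fin 3) (f h : V3 → ℝ) (x : V3) (hf : DifferentiableAt ℝ f x)
    (hh : DifferentiableAt ℝ h x) (h0 : f x ≠ 0) :
    pd i (fun y => (f y ^ 2)⁻¹ * h y) x
      = (f x ^ 2)⁻¹ * pd i h x - 2 * (f x ^ 3)⁻¹ * pd i f x * h x := by
  unfold pd
  have h1 : HasFDerivAt (fun y => (f y ^ 2)⁻¹) _ x :=
    (hasDerivAt_inv (pow_ne_zero 2 h0)).comp_hasFDerivAt x (hf.hasFDerivAt.pow 2)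
  rw [(h1.fun_mul hh.hasFDerivAt).fderiv]
  simp
  field_simp
  ring

lemma cd_two (f : V3 → ℝ) (x : V3) (hf : ContDiffAt ℝ (⊤ : ℕ∞) f x) : ContDiffAt ℝ 2 f x := by
  have := contDiffAt_infty.1 hf 2
  exact_mod_cast this

lemma pd_comm (i j : Fin 3) (f : V3 → ℝ) (x : V3) (hf : ContDiffAt ℝ (⊤ : ℕ∞) f x) :
    pd i (fun y => pd j f y) x = pd j (fun y => pd i f y) x := by
  have hs : IsSymmSndFDerivAt ℝ f x := (cd_two f x hf).isSymmSndFDerivAt (by simp)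
  have hd : DifferentiableAt ℝ (fderiv ℝ f) x :=
    ((cd_two f x hf).fderiv_right (m := 1) (by norm_num)).differentiableAt (by simp)
  have key : ∀ k l : Fin 3, pd k (fun y => pd l f y) x
      = fderiv ℝ (fderiv ℝ f) x (Pi.single k 1) (Pi.single l 1) := by
    intro k l
    unfold pd
    rw [(hd.hasFDerivAt.clm_apply (hasFDerivAt_const _ x)).fderiv]
    simp
  rw [key, key]
  exact hs _ _

lemma pd_diff (j : Fin 3) (f : V3 → ℝ) (x : V3) (hf : ContDiffAt ℝ (⊤ : ℕ∞) f x) :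
    DifferentiableAt ℝ (fun y => pd j f y) x := by
  have hd : DifferentiableAt ℝ (fderiv ℝ f) x :=
    ((cd_two f x hf).fderiv_right (m := 1) (by norm_num)).differentiableAt (by simp)
  unfold pd
  fun_prop

lemma pd_congr (U : Set V3) (hU : IsOpen U) (i : Fin 3) (f h : V3 → ℝ) (x : V3) (hx : x ∈ U)
    (e : ∀ y ∈ U, f y = h y) : pd i f x = pd i h x := by
  unfold pd
  rw [Filter.EventuallyEq.fderiv_eq (Filter.eventually_of_mem (hU.mem_nhds hx) e)]

lemma inv_block (p q r s a : ℝ) (hD : p * s - q * r ≠ 0) (ha : a ≠ 0) :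
    (!![p, q, 0; r, s, 0; 0, 0, a] : Matrix (Fin 3) (Fin 3) ℝ)⁻¹
      = !![s / (p * s - q * r), -q / (p * s - q * r), 0;
           -r / (p * s - q * r), p / (p * s - q * r), 0; 0, 0, a⁻¹] := by
  apply Matrix.inv_eq_right_inv
  have hD' : -(r * q) + s * p ≠ 0 := by
    intro h
    apply hD
    linarith
  have hD2 : -(r * q) + p * s ≠ 0 := by
    intro h
    apply hD
    linarith
  ext i j
  fin_cases i <;> fin_cases j <;> simp [Matrix.mul_apply, Fin.sum_univ_three, ha] <;>
    (try field_simp) <;> (try ring_nf)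
  linear_combination mul_inv_cancel₀ hD2

/-- **Axially symmetric solutions of Section 2 given by (45) and (28)** (containing the Kerr
data (8a)–(10a)): for the metric `g = g̃_{ab} dx^a dx^b + α² dφ²` with `g̃`, `α`, `ω`
independent of `φ = x³`, the tensor with `T^{ab} = T^{33} = 0` and
`T^{a3} = α⁻³ (det g̃)^{-1/2} ε^{ab} ∂_b ω` is trace-free and satisfies the momentum
constraint `∇_j T^{ij} = 0`. -/
theorem axially_symmetric_momentum_constraint
    (U : Set V3) (hU : IsOpen U)
    (gt : V3 → Matrix (Fin 2) (Fin 2) ℝ) (α ω : V3 → ℝ)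
    (hgt_smooth : ∀ a b, ContDiffOn ℝ (⊤ : ℕ∞) (fun x => gt x a b) U)
    (hgt_pos : ∀ x ∈ U, (gt x).PosDef)
    (hgt_ind : ∀ x t, gt (Function.update x 2 t) = gt x)
    (hα_smooth : ContDiffOn ℝ (⊤ : ℕ∞) α U) (hα_pos : ∀ x ∈ U, 0 < α x)
    (hα_ind : ∀ x t, α (Function.update x 2 t) = α x)
    (hω_smooth : ContDiffOn ℝ (⊤ : ℕ∞) ω U)
    (hω_ind : ∀ x t, ω (Function.update x 2 t) = ω x) :
    let g : V3 → Matrix (Fin 3) (Fin 3) ℝ := fun x =>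
      !![gt x 0 0, gt x 0 1, 0;
         gt x 1 0, gt x 1 1, 0;
         0, 0, (α x) ^ 2]
    let c : V3 → ℝ := fun x => ((α x) ^ 3)⁻¹ * (Real.sqrt (gt x).det)⁻¹
    let T : V3 → Matrix (Fin 3) (Fin 3) ℝ := fun x =>
      !![0, 0, c x * pd 1 ω x;
         0, 0, -(c x * pd 0 ω x);
         c x * pd 1 ω x, -(c x * pd 0 ω x), 0]
    (∀ x ∈ U, ∑ i, ∑ j, g x i j * T x i j = 0) ∧
    (∀ i, ∀ x ∈ U, covDivUp g T i x = 0) := by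
  intro g c T
  have hdet : ∀ x, (g x).det = α x ^ 2 * (gt x).det := by
    intro x
    simp only [g, Matrix.det_fin_three, Matrix.det_fin_two]
    simp
    ring
  have hdpos : ∀ x ∈ U, 0 < (gt x).det := fun x hx => (hgt_pos x hx).det_pos
  have hsd : ∀ x ∈ U, sqrtDet g x = α x * Real.sqrt (gt x).det := by
    intro x hx
    unfold sqrtDet
    rw [hdet, Real.sqrt_mul (sq_nonneg _), Real.sqrt_sq (hα_pos x hx).le]
  have hsc : ∀ x ∈ U, sqrtDet g x * c x = (α x ^ 2)⁻¹ := by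
    intro x hx
    rw [hsd x hx]
    have h1 := (hα_pos x hx).ne'
    have h2 := (Real.sqrt_pos.2 (hdpos x hx)).ne'
    simp only [c]
    field_simp
  have hgind : ∀ x t, g (Function.update x 2 t) = g x := by
    intro x t
    simp only [g, hgt_ind, hα_ind]
  have hTind : ∀ x t, T (Function.update x 2 t) = T x := by
    intro x t
    simp only [T, c, hgt_ind, hα_ind, pd_ind _ ω hω_ind]
  have hg2 : ∀ j k x, pd 2 (fun y => g y j k) x = 0 := fun j k x =>
    pd_two_zero _ (fun x t => by rw [hgind]) x
  have hT2 : ∀ i j x, pd 2 (fun y => sqrtDet g y * T y i j) x = 0 := fun i j x =>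
    pd_two_zero _ (fun x t => by simp only [sqrtDet]; rw [hgind, hTind]) x
  have hinv : ∀ x ∈ U, (g x)⁻¹ = _ := fun x hx =>
    inv_block (gt x 0 0) (gt x 0 1) (gt x 1 0) (gt x 1 1) (α x ^ 2)
      (by rw [← Matrix.det_fin_two]; exact (hdpos x hx).ne')
      (pow_ne_zero 2 (hα_pos x hx).ne')
  have T00 : ∀ y, T y 0 0 = 0 := fun y => by simp [T]
  have T01 : ∀ y, T y 0 1 = 0 := fun y => by simp [T]
  have T10 : ∀ y, T y 1 0 = 0 := fun y => by simp [T]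
  have T11 : ∀ y, T y 1 1 = 0 := fun y => by simp [T]
  have T22 : ∀ y, T y 2 2 = 0 := fun y => by simp [T]
  have T02 : ∀ y, T y 0 2 = c y * pd 1 ω y := fun y => by simp [T]
  have T20 : ∀ y, T y 2 0 = c y * pd 1 ω y := fun y => by simp [T]
  have T12 : ∀ y, T y 1 2 = -(c y * pd 0 ω y) := fun y => by simp [T]
  have T21 : ∀ y, T y 2 1 = -(c y * pd 0 ω y) := fun y => by simp [T]
  have g02 : ∀ y, g y 0 2 = 0 := fun y => by simp [g]
  have g12 : ∀ y, g y 1 2 = 0 := fun y => by simp [g]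
  have g20 : ∀ y, g y 2 0 = 0 := fun y => by simp [g]
  have g21 : ∀ y, g y 2 1 = 0 := fun y => by simp [g]
  have g22 : ∀ y, g y 2 2 = α y ^ 2 := fun y => by simp [g]
  refine ⟨?_, ?_⟩
  · intro x hx
    simp only [Fin.sum_univ_three, T00, T01, T10, T11, T22, g02, g12, g20, g21]
    ring
  · intro i x hx
    have i02 : (g x)⁻¹ 0 2 = 0 := by rw [hinv x hx]; simp
    have i12 : (g x)⁻¹ 1 2 = 0 := by rw [hinv x hx]; simp
    have i20 : (g x)⁻¹ 2 0 = 0 := by rw [hinv x hx]; simp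
    have i21 : (g x)⁻¹ 2 1 = 0 := by rw [hinv x hx]; simp
    have i22 : (g x)⁻¹ 2 2 = (α x ^ 2)⁻¹ := by rw [hinv x hx]; simp
    have hαx : ContDiffAt ℝ (⊤ : ℕ∞) α x := hα_smooth.contDiffAt (hU.mem_nhds hx)
    have hωx : ContDiffAt ℝ (⊤ : ℕ∞) ω x := hω_smooth.contDiffAt (hU.mem_nhds hx)
    have hαd : DifferentiableAt ℝ α x := hαx.differentiableAt (by simp)
    have hα0 := (hα_pos x hx).ne'
    have hs0 := (Real.sqrt_pos.2 (hdpos x hx)).ne'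
    have e0 : pd 0 (fun y => sqrtDet g y * (c y * pd 1 ω y)) x
        = pd 0 (fun y => (α y ^ 2)⁻¹ * pd 1 ω y) x :=
      pd_congr U hU _ _ _ x hx (fun y hy => by rw [← hsc y hy]; ring)
    have e1 : pd 1 (fun y => sqrtDet g y * -(c y * pd 0 ω y)) x
        = pd 1 (fun y => (α y ^ 2)⁻¹ * -pd 0 ω y) x :=
      pd_congr U hU _ _ _ x hx (fun y hy => by rw [← hsc y hy]; ring)
    have hneg : pd 1 (fun y => -pd 0 ω y) x = - pd 1 (fun y => pd 0 ω y) x := by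
      unfold pd
      rw [fderiv_fun_neg]
      simp
    unfold covDivUp christoffel
    fin_cases i
    · simp only [Fin.sum_univ_three, Fin.zero_eta, Fin.mk_one, Fin.reduceFinMk, hT2, hg2, T00,
        T01, T10, T11, T22, g02, g12, g20, g21, mul_zero, pd_const, i02]
      ring
    · simp only [Fin.sum_univ_three, Fin.zero_eta, Fin.mk_one, Fin.reduceFinMk, hT2, hg2, T00,
        T01, T10, T11, T22, g02, g12, g20, g21, mul_zero, pd_const, i12]
      ring
    · simp only [Fin.sum_univ_three, Fin.zero_eta, Fin.mk_one, Fin.reduceFinMk, hT2, hg2, T00,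
        T01, T10, T11, T22, T02, T20, T12, T21, g02, g12, g20, g21, g22, mul_zero, pd_const,
        i20, i21, i22, e0, e1]
      rw [pd_quot 0 α _ x hαd (pd_diff 1 ω x hωx) hα0,
        pd_quot 1 α (fun y => -pd 0 ω y) x hαd (pd_diff 0 ω x hωx).neg hα0, hneg, pd_comm 1 0 ω x hωx,
        pd_sq _ _ _ hαd, pd_sq _ _ _ hαd, hsd x hx]
      simp only [c]
      field_simp
      ring
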